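/- arXiv:0804.2046 — 7 statements merged into one kernel-verified Lean document; each statement's English description precedes it below -/
import Mathlib

section
/- Let m* > 0, T0* > 0, g_s* > 0, a ∈ ℝ, z ∈ {−1, 1}, and α, β > 0. Set the transformed parameters g_s = β⁴ g_s*, m = (α/β) m*, T0 = (α/β) T0*, μ0 = a·T0 and μ0* = a·T0*. Then for every k ≥ 0 and every F > 0 (assuming, when z = −1, that m*·F > μ0*): I¹_k(F; g_s, m, T0, μ0) = α^{2k+1} β^{3−2k} · I¹_k(F; g_s*, m*, T0*, μ0*) and I²_k(F; g_s, m, T0, μ0) = α^{2k+2} β^{2−2k} · I²_k(F; g_s*, m*, T0*, μ0*). -/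
/-! Substitute `ε = (α/β) x`. The density only picks up the factor `β⁴` (`phaseN_scale`), the
weight `(ε² − m²)^k` the factor `(α/β)^(2k)` (`weight_scale`), `dε` one factor `α/β`, and in `I2`
the extra `ε` another. Convergence of the integrals plays no role, since the linear change of
variables `integral_Ioi_scale` holds for the Bochner integral without integrability. -/

open MeasureTheory Real Set

/-- One-particle phase-space density (Planck units, h³ = 8π³):
`𝒩(E) = (g_s/(8π³)) · (exp((E − μ0)/T0) + z)⁻¹`. -/
noncomputable def phaseN (gs T0 μ0 z E : ℝ) : ℝ :=
  gs / (8 * π ^ 3) * (Real.exp ((E - μ0) / T0) + z)⁻¹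

/-- Moment integral `I¹_k(F) = ∫_m^∞ (ε² − m²)^k 𝒩(εF) dε`. -/
noncomputable def I1 (k gs m T0 μ0 z F : ℝ) : ℝ :=
  ∫ ε in Ioi m, (ε ^ 2 - m ^ 2) ^ k * phaseN gs T0 μ0 z (ε * F)

/-- Moment integral `I²_k(F) = ∫_m^∞ (ε² − m²)^k ε 𝒩(εF) dε`. -/
noncomputable def I2 (k gs m T0 μ0 z F : ℝ) : ℝ :=
  ∫ ε in Ioi m, (ε ^ 2 - m ^ 2) ^ k * ε * phaseN gs T0 μ0 z (ε * F)

/-- The exponent `(E − μ0)/T0` is invariant when `E`, `μ0` and `T0` are scaled together, so only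
the factor `β⁴` of `g_s` survives. -/
lemma phaseN_scale {c : ℝ} (hc : 0 < c) (b gs T a z E : ℝ) :
    phaseN (b * gs) (c * T) (a * (c * T)) z (c * E) = b * phaseN gs T (a * T) z E := by
  unfold phaseN
  have h : (c * E - a * (c * T)) / (c * T) = (E - a * T) / T := by
    rw [show c * E - a * (c * T) = c * (E - a * T) by ring, mul_div_mul_left _ _ hc.ne']
  rw [h]
  ring

/-- The weight `(ε² − m²)^k` is homogeneous of degree `2k`; `x > m` makes the base of the real
power nonnegative. -/
lemma weight_scale {c m x : ℝ} (hc : 0 < c) (hm : 0 < m) (hx : m < x) (k : ℝ) :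
    ((c * x) ^ 2 - (c * m) ^ 2) ^ k = c ^ (2 * k) * (x ^ 2 - m ^ 2) ^ k := by
  have h : 0 ≤ x ^ 2 - m ^ 2 := by nlinarith
  rw [show (c * x) ^ 2 - (c * m) ^ 2 = c ^ 2 * (x ^ 2 - m ^ 2) by ring,
    mul_rpow (by positivity) h, rpow_mul hc.le, rpow_two]

/-- Substitution `ε = c x` in an integral over `(m, ∞)`, for an integrand that picks up the
constant factor `d`. -/
lemma integral_Ioi_scale {c d m : ℝ} (hc : 0 < c) (f g : ℝ → ℝ)
    (h : ∀ x ∈ Ioi m, f (c * x) = d * g x) :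
    ∫ x in Ioi (c * m), f x = c * d * ∫ x in Ioi m, g x := by
  have h1 := integral_comp_mul_left_Ioi f m hc
  rw [setIntegral_congr_fun measurableSet_Ioi h, integral_const_mul, smul_eq_mul] at h1
  rw [mul_assoc, h1, mul_inv_cancel_left₀ hc.ne']

/-- Scaling behaviour of the moment integrals `I¹_k` and `I²_k` under the
parameter transformation `g_s = β⁴ g_s*`, `m = (α/β) m*`, `T0 = (α/β) T0*`,
`μ0 = a·T0`, `μ0* = a·T0*`. -/
theorem stmt0 (ms T0s gss a z α β : ℝ)
    (hms : 0 < ms) (hT0s : 0 < T0s) (hgss : 0 < gss)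
    (hz : z = -1 ∨ z = 1) (hα : 0 < α) (hβ : 0 < β)
    (k : ℝ) (hk : 0 ≤ k) (F : ℝ) (hF : 0 < F)
    (hpos : z = -1 → a * T0s < ms * F) :
    I1 k (β ^ 4 * gss) (α / β * ms) (α / β * T0s) (a * (α / β * T0s)) z F
      = α ^ (2 * k + 1) * β ^ (3 - 2 * k) * I1 k gss ms T0s (a * T0s) z F ∧
    I2 k (β ^ 4 * gss) (α / β * ms) (α / β * T0s) (a * (α / β * T0s)) z F
      = α ^ (2 * k + 2) * β ^ (2 - 2 * k) * I2 k gss ms T0s (a * T0s) z F := by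
  have hc : 0 < α / β := div_pos hα hβ
  -- Powers of `α / β` combine with `β⁴` into the stated prefactors.
  have hpow : ∀ s : ℝ, (α / β) ^ s * β ^ 4 = α ^ s * β ^ (4 - s) := by
    intro s
    rw [div_rpow hα.le hβ.le, rpow_sub hβ, show β ^ (4 : ℝ) = β ^ 4 from mod_cast rpow_natCast β 4]
    ring
  constructor
  · unfold I1
    rw [integral_Ioi_scale (d := (α / β) ^ (2 * k) * β ^ 4) hc _
      (fun ε => (ε ^ 2 - ms ^ 2) ^ k * phaseN gss T0s (a * T0s) z (ε * F))]
    · rw [show 3 - 2 * k = 4 - (2 * k + 1) by ring, ← hpow, rpow_add_one hc.ne']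
      ring
    · intro x hx
      simp only [mul_assoc (α / β) x F]
      rw [weight_scale hc hms hx, phaseN_scale hc]
      ring
  · unfold I2
    rw [integral_Ioi_scale (d := (α / β) ^ (2 * k) * (α / β) * β ^ 4) hc _
      (fun ε => (ε ^ 2 - ms ^ 2) ^ k * ε * phaseN gss T0s (a * T0s) z (ε * F))]
    · rw [show 2 - 2 * k = 4 - (2 * k + 2) by ring, ← hpow, rpow_add hc, rpow_two]
      ring
    · intro x hx
      simp only [mul_assoc (α / β) x F]
      rw [weight_scale hc hms hx, phaseN_scale hc]
      ring
end

section
/- Let m* > 0, T0* > 0, g_s* > 0, a ∈ ℝ, z ∈ {−1, 1}, and α, β > 0. Set g_s = β⁴ g_s*, m = (α/β) m*, T0 = (α/β) T0*, μ0 = a·T0, μ0* = a·T0*. Then for every F > 0 (assuming, when z = −1, that m*·F > μ0*), the pressure satisfies P(F; g_s, m, T0, μ0) = α⁴ · P(F; g_s*, m*, T0*, μ0*). -/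
/-!
Substitute `ε = c ε'` with `c = α / β`. All energies (`m`, `T0`, `μ0`) scale by `c`, so the exponent
`(εF − μ0)/T0` is invariant, while `(ε² − m²)^{3/2}` contributes `c³` and `dε` contributes `c`.
Together with the factor `β⁴` from `g_s` this gives `β⁴ c⁴ = α⁴`.
-/

open MeasureTheory Real Set

/-- Energy density `ρ = 4π ∫_m^∞ [(ε² − m²)^{3/2} + m²(ε² − m²)^{1/2}] 𝒩(εF) dε`. -/
noncomputable def rhoDef (gs m T0 μ0 z F : ℝ) : ℝ :=
  4 * π * ∫ ε in Ioi m,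
    ((ε ^ 2 - m ^ 2) ^ ((3 : ℝ) / 2) + m ^ 2 * (ε ^ 2 - m ^ 2) ^ ((1 : ℝ) / 2))
      * phaseN gs T0 μ0 z (ε * F)

/-- Pressure `P = (4π/3) ∫_m^∞ (ε² − m²)^{3/2} 𝒩(εF) dε`. -/
noncomputable def Pdef (gs m T0 μ0 z F : ℝ) : ℝ :=
  4 * π / 3 * ∫ ε in Ioi m, (ε ^ 2 - m ^ 2) ^ ((3 : ℝ) / 2) * phaseN gs T0 μ0 z (ε * F)

/-- Entropy density
`σ = (4πF/T0) ∫_m^∞ [(4/3)(ε² − m²)^{3/2} + (ε² − m²)^{1/2}(m² − ε μ0/F)] 𝒩(εF) dε`. -/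
noncomputable def sigmaDef (gs m T0 μ0 z F : ℝ) : ℝ :=
  4 * π * F / T0 * ∫ ε in Ioi m,
    ((4 / 3) * (ε ^ 2 - m ^ 2) ^ ((3 : ℝ) / 2)
      + (ε ^ 2 - m ^ 2) ^ ((1 : ℝ) / 2) * (m ^ 2 - ε * μ0 / F))
      * phaseN gs T0 μ0 z (ε * F)

/-- Particle density `n = 4π ∫_m^∞ (ε² − m²)^{1/2} ε 𝒩(εF) dε`. -/
noncomputable def nDef (gs m T0 μ0 z F : ℝ) : ℝ :=
  4 * π * ∫ ε in Ioi m, (ε ^ 2 - m ^ 2) ^ ((1 : ℝ) / 2) * ε * phaseN gs T0 μ0 z (ε * F)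

/-- Scaling behaviour of the pressure: with `g_s = β⁴ g_s*`, `m = (α/β) m*`,
`T0 = (α/β) T0*`, `μ0 = a·T0`, `μ0* = a·T0*`, one has `P = α⁴ P*`. -/
theorem stmt2 (ms T0s gss a z α β : ℝ)
    (hms : 0 < ms) (hT0s : 0 < T0s) (hgss : 0 < gss)
    (hz : z = -1 ∨ z = 1) (hα : 0 < α) (hβ : 0 < β)
    (F : ℝ) (hF : 0 < F) (hpos : z = -1 → a * T0s < ms * F) :
    Pdef (β ^ 4 * gss) (α / β * ms) (α / β * T0s) (a * (α / β * T0s)) z F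
      = α ^ 4 * Pdef gss ms T0s (a * T0s) z F := by
  have hc : 0 < α / β := div_pos hα hβ
  have hβ0 : β ≠ 0 := hβ.ne'
  have hαc : α = α / β * β := by field_simp
  generalize α / β = c at hc hαc ⊢
  subst hαc
  have key := integral_comp_mul_left_Ioi
    (fun ε => (ε ^ 2 - (c * ms) ^ 2) ^ ((3 : ℝ) / 2)
      * phaseN (β ^ 4 * gss) (c * T0s) (a * (c * T0s)) z (ε * F)) ms hc
  have hint : ∀ ε ∈ Ioi ms, ((c * ε) ^ 2 - (c * ms) ^ 2) ^ ((3 : ℝ) / 2)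
      * phaseN (β ^ 4 * gss) (c * T0s) (a * (c * T0s)) z (c * ε * F)
      = c ^ 3 * β ^ 4 * ((ε ^ 2 - ms ^ 2) ^ ((3 : ℝ) / 2)
        * phaseN gss T0s (a * T0s) z (ε * F)) := by
    intro ε hε
    have hε' : ms < ε := hε
    have h1 : 0 ≤ ε ^ 2 - ms ^ 2 := by nlinarith
    have h2 : (c * ε) ^ 2 - (c * ms) ^ 2 = c ^ 2 * (ε ^ 2 - ms ^ 2) := by ring
    have h3 : (c ^ 2) ^ ((3 : ℝ) / 2) = c ^ 3 := by
      rw [← Real.rpow_natCast, ← Real.rpow_mul hc.le, ← Real.rpow_natCast]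
      norm_num
    have h4 : (c * ε * F - a * (c * T0s)) / (c * T0s) = (ε * F - a * T0s) / T0s := by
      field_simp
    rw [h2, Real.mul_rpow (by positivity) h1, h3]
    unfold phaseN
    rw [h4]
    ring
  rw [setIntegral_congr_fun measurableSet_Ioi hint, integral_const_mul, smul_eq_mul,
    eq_inv_mul_iff_mul_eq₀ hc.ne'] at key
  unfold Pdef
  rw [← key]
  ring
end

section
/- Let m* > 0, T0* > 0, g_s* > 0, a ∈ ℝ, z ∈ {−1, 1}, and α, β > 0. Set g_s = β⁴ g_s*, m = (α/β) m*, T0 = (α/β) T0*, μ0 = a·T0, μ0* = a·T0*. Then for every F > 0 (assuming, when z = −1, that m*·F > μ0*), the entropy density satisfies σ(F; g_s, m, T0, μ0) = β α³ · σ(F; g_s*, m*, T0*, μ0*). -/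
/-!
The substitution `ε = c η` with `c = α/β` maps `η ∈ Ioi ms` onto `ε ∈ Ioi (c * ms)`. Each summand of
the bracket is homogeneous of degree 3 in `(ε, m, T0)` (`rpow_sq_sub_sq_scale`, with `μ0 = a T0`),
while the exponent `(ε F − a T0)/T0 = ε F/T0 − a` is homogeneous of degree 0, so the integrand picks
up the factor `c³ β⁴`. The Jacobian `c` cancels the `c⁻¹` from the prefactor `1/T0`, which leaves
`c³ β⁴ = β α³`.
-/

open MeasureTheory Real Set

/-- Real powers of `ε² − m²` are homogeneous under a common positive rescaling of `ε` and `m`. -/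
lemma rpow_sq_sub_sq_scale {c ε m : ℝ} (hc : 0 < c) (h : 0 ≤ ε ^ 2 - m ^ 2) (p : ℝ) :
    ((c * ε) ^ 2 - (c * m) ^ 2) ^ p = c ^ (2 * p) * (ε ^ 2 - m ^ 2) ^ p := by
  rw [show (c * ε) ^ 2 - (c * m) ^ 2 = c ^ 2 * (ε ^ 2 - m ^ 2) by ring,
    Real.mul_rpow (sq_nonneg c) h, Real.rpow_mul hc.le, Real.rpow_two]

/-- Scaling behaviour of the entropy density: with `g_s = β⁴ g_s*`, `m = (α/β) m*`,
`T0 = (α/β) T0*`, `μ0 = a·T0`, `μ0* = a·T0*`, one has `σ = β α³ σ*`. -/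
theorem stmt3 (ms T0s gss a z α β : ℝ)
    (hms : 0 < ms) (hT0s : 0 < T0s) (hgss : 0 < gss)
    (hz : z = -1 ∨ z = 1) (hα : 0 < α) (hβ : 0 < β)
    (F : ℝ) (hF : 0 < F) (hpos : z = -1 → a * T0s < ms * F) :
    sigmaDef (β ^ 4 * gss) (α / β * ms) (α / β * T0s) (a * (α / β * T0s)) z F
      = β * α ^ 3 * sigmaDef gss ms T0s (a * T0s) z F := by
  have hc : 0 < α / β := div_pos hα hβ
  have hcβ : (α / β) ^ 3 * β ^ 4 = β * α ^ 3 := by field_simp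
  generalize α / β = c at hc hcβ ⊢
  have hN (ε : ℝ) : phaseN (β ^ 4 * gss) (c * T0s) (a * (c * T0s)) z (c * ε * F)
      = β ^ 4 * phaseN gss T0s (a * T0s) z (ε * F) := by
    unfold phaseN
    rw [show (c * ε * F - a * (c * T0s)) / (c * T0s) = (ε * F - a * T0s) / T0s by field_simp]
    ring
  have h3 : c ^ (2 * ((3 : ℝ) / 2)) = c ^ 3 := by
    rw [show 2 * ((3 : ℝ) / 2) = (3 : ℕ) by norm_num, Real.rpow_natCast]
  have h1 : c ^ (2 * ((1 : ℝ) / 2)) = c := by norm_num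
  have hsub := integral_comp_mul_left_Ioi (fun ε : ℝ =>
    ((4 / 3) * (ε ^ 2 - (c * ms) ^ 2) ^ ((3 : ℝ) / 2)
      + (ε ^ 2 - (c * ms) ^ 2) ^ ((1 : ℝ) / 2)
        * ((c * ms) ^ 2 - ε * (a * (c * T0s)) / F))
      * phaseN (β ^ 4 * gss) (c * T0s) (a * (c * T0s)) z (ε * F)) ms hc
  rw [smul_eq_mul, eq_inv_mul_iff_mul_eq₀ hc.ne'] at hsub
  unfold sigmaDef
  rw [← hsub, ← hcβ]
  have hint : ∀ ε ∈ Ioi ms,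
      ((4 / 3) * ((c * ε) ^ 2 - (c * ms) ^ 2) ^ ((3 : ℝ) / 2)
        + ((c * ε) ^ 2 - (c * ms) ^ 2) ^ ((1 : ℝ) / 2)
          * ((c * ms) ^ 2 - c * ε * (a * (c * T0s)) / F))
        * phaseN (β ^ 4 * gss) (c * T0s) (a * (c * T0s)) z (c * ε * F)
      = c ^ 3 * β ^ 4 * (((4 / 3) * (ε ^ 2 - ms ^ 2) ^ ((3 : ℝ) / 2)
        + (ε ^ 2 - ms ^ 2) ^ ((1 : ℝ) / 2) * (ms ^ 2 - ε * (a * T0s) / F))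
        * phaseN gss T0s (a * T0s) z (ε * F)) := by
    intro ε hε
    have hnonneg : 0 ≤ ε ^ 2 - ms ^ 2 := sub_nonneg.2 (pow_le_pow_left₀ hms.le (le_of_lt hε) 2)
    rw [rpow_sq_sub_sq_scale hc hnonneg, rpow_sq_sub_sq_scale hc hnonneg, h3, h1, hN]
    ring
  rw [setIntegral_congr_fun measurableSet_Ioi hint, integral_const_mul]
  -- Kept opaque so that `field_simp` does not rewrite under the integral sign.
  generalize (∫ ε in Ioi ms, (_ : ℝ)) = I
  field_simp
end

section
/- Let m* > 0, T0* > 0, g_s* > 0, a ∈ ℝ, z ∈ {−1, 1}, and α, β > 0. Set g_s = β⁴ g_s*, m = (α/β) m*, T0 = (α/β) T0*, μ0 = a·T0, μ0* = a·T0*. Then for every F > 0 (assuming, when z = −1, that m*·F > μ0*), the particle density satisfies n(F; g_s, m, T0, μ0) = β α³ · n(F; g_s*, m*, T0*, μ0*). -/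
/-! With `k = α / β`, the substitution `ε ↦ k * ε` maps `(ms, ∞)` onto `(k * ms, ∞)`. It leaves the
argument `(ε F − μ0) / T0` of the exponential unchanged, because `μ0` and `T0` scale by `k` as well,
and multiplies each of `(ε² − m²)^{1/2}`, `ε` and `dε` by `k`. With the factor `β⁴` from `g_s` the
density is therefore multiplied by `β⁴ k³ = β α³`. No integrability is needed: the change of
variables is an identity of Bochner integrals in all cases. -/

open MeasureTheory Real Set

/-- Scaling behaviour of the particle density: with `g_s = β⁴ g_s*`, `m = (α/β) m*`,
`T0 = (α/β) T0*`, `μ0 = a·T0`, `μ0* = a·T0*`, one has `n = β α³ n*`. -/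
theorem stmt4 (ms T0s gss a z α β : ℝ)
    (hms : 0 < ms) (hT0s : 0 < T0s) (hgss : 0 < gss)
    (hz : z = -1 ∨ z = 1) (hα : 0 < α) (hβ : 0 < β)
    (F : ℝ) (hF : 0 < F) (hpos : z = -1 → a * T0s < ms * F) :
    nDef (β ^ 4 * gss) (α / β * ms) (α / β * T0s) (a * (α / β * T0s)) z F
      = β * α ^ 3 * nDef gss ms T0s (a * T0s) z F := by
  have hαβ : α = α / β * β := by field_simp
  have hk : 0 < α / β := by positivity
  generalize α / β = k at hαβ hk ⊢
  unfold nDef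
  have hsub := integral_comp_mul_left_Ioi
    (fun ε => (ε ^ 2 - (k * ms) ^ 2) ^ ((1 : ℝ) / 2) * ε *
      phaseN (β ^ 4 * gss) (k * T0s) (a * (k * T0s)) z (ε * F)) ms hk
  have hscale : ∫ ε in Ioi ms, ((k * ε) ^ 2 - (k * ms) ^ 2) ^ ((1 : ℝ) / 2) * (k * ε) *
        phaseN (β ^ 4 * gss) (k * T0s) (a * (k * T0s)) z (k * ε * F)
      = k ^ 2 * β ^ 4 * ∫ ε in Ioi ms,
        (ε ^ 2 - ms ^ 2) ^ ((1 : ℝ) / 2) * ε * phaseN gss T0s (a * T0s) z (ε * F) := by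
    rw [← integral_const_mul]
    refine setIntegral_congr_fun measurableSet_Ioi fun ε hε => ?_
    have hε' : ms < ε := hε
    have hroot : ((k * ε) ^ 2 - (k * ms) ^ 2) ^ ((1 : ℝ) / 2)
        = k * (ε ^ 2 - ms ^ 2) ^ ((1 : ℝ) / 2) := by
      rw [← Real.sqrt_eq_rpow, ← Real.sqrt_eq_rpow,
        show (k * ε) ^ 2 - (k * ms) ^ 2 = k ^ 2 * (ε ^ 2 - ms ^ 2) by ring,
        Real.sqrt_mul (sq_nonneg k), Real.sqrt_sq hk.le]
    have hexp : (k * ε * F - a * (k * T0s)) / (k * T0s) = (ε * F - a * T0s) / T0s := by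
      rw [show k * ε * F - a * (k * T0s) = k * (ε * F - a * T0s) by ring,
        mul_div_mul_left _ _ hk.ne']
    simp only [phaseN, hroot, hexp]
    ring
  rw [hscale, smul_eq_mul, eq_inv_mul_iff_mul_eq₀ hk.ne'] at hsub
  rw [← hsub, hαβ]
  ring
end

section
/- Fix m ≥ 0, g_s > 0, T0 > 0, μ0 ∈ ℝ, z ∈ {−1, 1}, and let D ⊆ (0, ∞) be the open set of F satisfying the positivity condition. Then the function F ↦ P(F) is differentiable on D and satisfies F · (dP/dF)(F) = −(ρ(F) + P(F)) for all F ∈ D. Consequently, if F : (0, r₁) → D is differentiable, the composed pressure p(r) = P(F(r)) satisfies the hydrostatic equilibrium equation p′(r) = −(p(r) + ρ(F(r))) · F′(r)/F(r). -/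
/-!
For `F` near a point `F₀` of the domain there is `F₁ < F₀` still satisfying the positivity
condition, and for `F ≥ F₁`, `ε ≥ m` the denominator `exp x + z`, `x = (εF - μ0)/T0`, is at least a
fixed positive multiple of `exp x` (`exists_denom_lower`). Hence `𝒩(εF)` and `𝒩'(εF)` are both
`O(exp (-F₁ε/T0))` (`exists_phaseN_bound`), a decay that beats every polynomial in `ε`, so one may
differentiate under the integral sign:
`P'(F) = (4π/3) ∫ (ε² - m²)^{3/2} ε 𝒩'(εF) dε` (`integral_hasDerivAt`).

Since `F 𝒩'(εF) = d/dε 𝒩(εF)`, the product `F P'(F)` can be integrated by parts. The boundary terms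
of `(ε² - m²)^{3/2} ε 𝒩(εF)` vanish at `ε = m` and at infinity, and
`d/dε [(ε² - m²)^{3/2} ε] = 4 (ε² - m²)^{3/2} + 3 m² (ε² - m²)^{1/2}`, which is
three times the weight of `𝒩(εF)` in `ρ + P`, the factor `4π` set aside (`integral_by_parts`). The
hydrostatic equation is then the chain rule.
-/

open MeasureTheory Real Set

/-! ### The phase-space density and its decay -/

/-- The derivative `𝒩'(E)` of the phase-space density with respect to the energy. -/
noncomputable def phaseNDeriv (gs T0 μ0 z E : ℝ) : ℝ :=
  gs / (8 * π ^ 3) *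
    (-(Real.exp ((E - μ0) / T0) * (1 / T0)) / (Real.exp ((E - μ0) / T0) + z) ^ 2)

lemma hasDerivAt_phaseN (gs T0 μ0 z E : ℝ) (h : Real.exp ((E - μ0) / T0) + z ≠ 0) :
    HasDerivAt (phaseN gs T0 μ0 z) (phaseNDeriv gs T0 μ0 z E) E := by
  have h1 : HasDerivAt (fun E : ℝ => Real.exp ((E - μ0) / T0) + z)
      (Real.exp ((E - μ0) / T0) * (1 / T0)) E :=
    ((((hasDerivAt_id E).sub_const μ0).div_const T0).exp).add_const z
  exact (h1.inv h).const_mul (gs / (8 * π ^ 3))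

lemma measurable_phaseN (gs T0 μ0 z : ℝ) : Measurable (phaseN gs T0 μ0 z) := by
  unfold phaseN
  fun_prop

lemma measurable_phaseNDeriv (gs T0 μ0 z : ℝ) : Measurable (phaseNDeriv gs T0 μ0 z) := by
  unfold phaseNDeriv
  fun_prop

/-- On a half-line of energies `E ≥ E₁` on which the positivity condition holds, the denominator
is comparable to the Boltzmann factor. -/
lemma exists_denom_lower {T0 μ0 z E₁ : ℝ} (hT0 : 0 < T0) (hz : z = -1 ∨ z = 1)
    (hE₁ : z = -1 → μ0 < E₁) :
    ∃ c > 0, ∀ E, E₁ ≤ E → c * Real.exp ((E - μ0) / T0) ≤ Real.exp ((E - μ0) / T0) + z := by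
  rcases hz with rfl | rfl
  · have h0 : 0 < (E₁ - μ0) / T0 := div_pos (sub_pos.2 (hE₁ rfl)) hT0
    -- `exp x - 1 ≥ (1 - exp (-x₁)) exp x` amounts to `exp (x - x₁) ≥ 1`.
    refine ⟨1 - Real.exp (-((E₁ - μ0) / T0)), ?_, fun E hE => ?_⟩
    · have := Real.exp_lt_one_iff.2 (neg_lt_zero.2 h0)
      linarith
    · have h1 : (E₁ - μ0) / T0 ≤ (E - μ0) / T0 := by gcongr
      have h2 : 1 ≤ Real.exp (-((E₁ - μ0) / T0)) * Real.exp ((E - μ0) / T0) := by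
        rw [← Real.exp_add]
        exact Real.one_le_exp (by linarith)
      linarith
  · exact ⟨1, one_pos, fun E _ => by linarith⟩

/-- Exponential decay of the phase-space density and of its derivative. -/
lemma exists_phaseN_bound {gs T0 μ0 z E₁ : ℝ} (hgs : 0 < gs) (hT0 : 0 < T0)
    (hz : z = -1 ∨ z = 1) (hE₁ : z = -1 → μ0 < E₁) :
    ∃ C, 0 ≤ C ∧ ∀ E, E₁ ≤ E → 0 < Real.exp ((E - μ0) / T0) + z ∧
      |phaseN gs T0 μ0 z E| ≤ C * Real.exp (-E / T0) ∧
      |phaseNDeriv gs T0 μ0 z E| ≤ C * Real.exp (-E / T0) := by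
  obtain ⟨c, hc, h⟩ := exists_denom_lower hT0 hz hE₁
  set A : ℝ := gs / (8 * π ^ 3) with hA
  have hA0 : 0 < A := by positivity
  set B : ℝ := Real.exp (μ0 / T0) with hB
  have hB0 : 0 < B := Real.exp_pos _
  refine ⟨A * (B / c) + A * (1 / T0 / c * (B / c)), by positivity, fun E hE => ?_⟩
  have hx := h E hE
  have hnB : Real.exp (-E / T0) * B * Real.exp ((E - μ0) / T0) = 1 := by
    rw [hB, ← Real.exp_add, ← Real.exp_add, Real.exp_eq_one_iff]
    ring
  have hn0 : 0 < Real.exp (-E / T0) := Real.exp_pos _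
  have hX0 : 0 < Real.exp ((E - μ0) / T0) := Real.exp_pos _
  simp only [phaseN, phaseNDeriv, ← hA]
  generalize Real.exp ((E - μ0) / T0) = X at *
  generalize Real.exp (-E / T0) = n at *
  have hD : 0 < X + z := lt_of_lt_of_le (by positivity) hx
  have h1 : (X + z)⁻¹ ≤ B / c * n := by
    rw [inv_le_iff_one_le_mul₀ hD]
    calc (1 : ℝ) = B / c * n * (c * X) := by field_simp; linarith
      _ ≤ B / c * n * (X + z) := by gcongr
  have h2 : X / (X + z) ≤ 1 / c := by
    rw [div_le_div_iff₀ hD hc]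
    linarith
  have e1 : 0 ≤ A * (B / c) * n := by positivity
  have e2 : 0 ≤ A * (1 / T0 / c * (B / c)) * n := by positivity
  refine ⟨hD, ?_, ?_⟩
  · rw [abs_of_pos (by positivity)]
    calc A * (X + z)⁻¹ ≤ A * (B / c * n) := by gcongr
      _ ≤ _ := by linarith
  · rw [abs_mul, abs_of_pos hA0, neg_div, abs_neg, abs_of_pos (by positivity)]
    calc A * (X * (1 / T0) / (X + z) ^ 2) = A * (1 / T0 * (X / (X + z)) * (X + z)⁻¹) := by
          field_simp
      _ ≤ A * (1 / T0 * (1 / c) * (B / c * n)) := by gcongr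
      _ = A * (1 / T0 / c * (B / c)) * n := by ring
      _ ≤ _ := by linarith

/-! ### Integrability -/

lemma integrableOn_pow_mul_exp {m k : ℝ} (hm : 0 ≤ m) (hk : 0 < k) (n : ℕ) :
    IntegrableOn (fun x : ℝ => x ^ n * Real.exp (-k * x)) (Ioi m) := by
  have h := integrableOn_rpow_mul_exp_neg_mul_rpow (p := 1) (s := n) (b := k)
    (by linarith [(Nat.cast_nonneg n : (0 : ℝ) ≤ n)]) one_pos hk
  simp only [Real.rpow_natCast, Real.rpow_one] at h
  exact h.mono_set (Ioi_subset_Ioi hm)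

/-- The momentum factor: `(ε² - m²)^{n/2} ≤ εⁿ`. -/
lemma momentum_rpow_bound {m ε : ℝ} (hm : 0 ≤ m) (hε : m < ε) (n : ℕ) :
    |(ε ^ 2 - m ^ 2) ^ ((n : ℝ) / 2)| ≤ ε ^ n := by
  have h0 : 0 ≤ ε ^ 2 - m ^ 2 := by nlinarith
  have hε0 : 0 ≤ ε := by linarith
  rw [abs_of_nonneg (Real.rpow_nonneg h0 _)]
  calc (ε ^ 2 - m ^ 2) ^ ((n : ℝ) / 2) ≤ (ε ^ 2) ^ ((n : ℝ) / 2) :=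
        Real.rpow_le_rpow h0 (by nlinarith) (by positivity)
    _ = ε ^ n := by
        rw [← Real.rpow_natCast ε 2, ← Real.rpow_mul hε0, ← Real.rpow_natCast ε n]
        congr 1
        push_cast
        ring

lemma momentum_bound_three {m ε : ℝ} (hm : 0 ≤ m) (hε : m < ε) :
    |(ε ^ 2 - m ^ 2) ^ ((3 : ℝ) / 2)| ≤ ε ^ 3 := by
  exact_mod_cast momentum_rpow_bound hm hε 3

lemma momentum_bound_one {m ε : ℝ} (hm : 0 ≤ m) (hε : m < ε) :
    |(ε ^ 2 - m ^ 2) ^ ((1 : ℝ) / 2)| ≤ ε := by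
  simpa using momentum_rpow_bound hm hε 1

/-- A polynomially bounded factor times an exponentially decaying one is integrable on
`(m, ∞)`. -/
lemma integrableOn_of_bound {m k C : ℝ} (hm : 0 ≤ m) (hk : 0 < k) (n : ℕ) {f g : ℝ → ℝ}
    (hf : Measurable f) (hg : Measurable g)
    (hfb : ∀ ε, m < ε → |f ε| ≤ ε ^ n)
    (hgb : ∀ ε, m < ε → |g ε| ≤ C * Real.exp (-k * ε)) :
    IntegrableOn (fun ε => f ε * g ε) (Ioi m) := by
  refine Integrable.mono' ((integrableOn_pow_mul_exp hm hk n).const_mul C)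
    (hf.mul hg).aestronglyMeasurable ?_
  refine (ae_restrict_mem measurableSet_Ioi).mono fun ε hε => ?_
  have hε : m < ε := hε
  have hε0 : 0 ≤ ε := by linarith
  rw [Real.norm_eq_abs, abs_mul]
  calc |f ε| * |g ε| ≤ ε ^ n * (C * Real.exp (-k * ε)) :=
        mul_le_mul (hfb ε hε) (hgb ε hε) (abs_nonneg _) (by positivity)
    _ = _ := by ring

/-! ### Uniformity in `F` -/

/-- The positivity condition is open, so it holds slightly to the left of `F` too. -/
lemma exists_smaller {m μ0 z F : ℝ} (hF : 0 < F) (h : z = -1 → μ0 < m * F) :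
    ∃ F₁, 0 < F₁ ∧ F₁ < F ∧ (z = -1 → μ0 < m * F₁) := by
  by_cases hz : z = -1
  · have hc : Filter.Tendsto (fun x : ℝ => m * x) (nhdsWithin F (Iio F)) (nhds (m * F)) :=
      ((continuous_const_mul m).tendsto F).mono_left nhdsWithin_le_nhds
    obtain ⟨F₁, h1, h2⟩ := ((hc.eventually_const_lt (h hz)).and
      (Ioo_mem_nhdsLT hF)).exists
    exact ⟨F₁, h2.1, h2.2, fun _ => h1⟩
  · exact ⟨F / 2, by linarith, by linarith, fun h => absurd h hz⟩

/-- The bounds of `exists_phaseN_bound`, in terms of `ε` and uniformly for `F ≥ F₁`. -/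
lemma exists_uniform_bound {m gs T0 μ0 z F₁ : ℝ} (hm : 0 ≤ m) (hgs : 0 < gs) (hT0 : 0 < T0)
    (hz : z = -1 ∨ z = 1) (h : z = -1 → μ0 < m * F₁) (hF₁ : 0 < F₁) :
    ∃ C, 0 ≤ C ∧ ∀ ε F, m ≤ ε → F₁ ≤ F → 0 < Real.exp ((ε * F - μ0) / T0) + z ∧
      |phaseN gs T0 μ0 z (ε * F)| ≤ C * Real.exp (-(F₁ / T0) * ε) ∧
      |phaseNDeriv gs T0 μ0 z (ε * F)| ≤ C * Real.exp (-(F₁ / T0) * ε) := by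
  obtain ⟨C, hC, hb⟩ := exists_phaseN_bound (gs := gs) hgs hT0 hz h
  refine ⟨C, hC, fun ε F hε hF => ?_⟩
  have hε0 : 0 ≤ ε := hm.trans hε
  obtain ⟨h1, h2, h3⟩ := hb (ε * F) (mul_le_mul hε hF hF₁.le hε0)
  have h4 : C * Real.exp (-(ε * F) / T0) ≤ C * Real.exp (-(F₁ / T0) * ε) := by
    gcongr
    rw [show -(F₁ / T0) * ε = -(ε * F₁) / T0 by ring]
    gcongr
  exact ⟨h1, h2.trans h4, h3.trans h4⟩

/-! ### The derivative of the pressure -/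

/-- Differentiation of the pressure integral under the integral sign. -/
lemma integral_hasDerivAt {m gs T0 μ0 z F : ℝ} (hm : 0 ≤ m) (hgs : 0 < gs) (hT0 : 0 < T0)
    (hz : z = -1 ∨ z = 1) (hF : 0 < F) (h : z = -1 → μ0 < m * F) :
    HasDerivAt
      (fun F => ∫ ε in Ioi m, (ε ^ 2 - m ^ 2) ^ ((3 : ℝ) / 2) * phaseN gs T0 μ0 z (ε * F))
      (∫ ε in Ioi m, (ε ^ 2 - m ^ 2) ^ ((3 : ℝ) / 2) * (phaseNDeriv gs T0 μ0 z (ε * F) * ε))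
      F := by
  obtain ⟨F₁, hF₁, hlt, hpos⟩ := exists_smaller hF h
  obtain ⟨C, hC, hb⟩ := exists_uniform_bound (gs := gs) hm hgs hT0 hz hpos hF₁
  have hk : 0 < F₁ / T0 := by positivity
  have hN := measurable_phaseN gs T0 μ0 z
  have hN' := measurable_phaseNDeriv gs T0 μ0 z
  refine (hasDerivAt_integral_of_dominated_loc_of_deriv_le (Ioi_mem_nhds hlt)
    (F' := fun F ε => (ε ^ 2 - m ^ 2) ^ ((3 : ℝ) / 2) * (phaseNDeriv gs T0 μ0 z (ε * F) * ε))
    (bound := fun ε => C * (ε ^ 4 * Real.exp (-(F₁ / T0) * ε)))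
    ?_ ?_ ?_ ?_ ((integrableOn_pow_mul_exp hm hk 4).const_mul C) ?_).2
  · exact Filter.Eventually.of_forall fun x => Measurable.aestronglyMeasurable (by fun_prop)
  · exact integrableOn_of_bound hm hk 3 (by fun_prop) (by fun_prop)
      (fun ε hε => momentum_bound_three hm hε) (fun ε hε => (hb ε F hε.le hlt.le).2.1)
  · exact Measurable.aestronglyMeasurable (by fun_prop)
  · refine (ae_restrict_mem measurableSet_Ioi).mono fun ε hε x hx => ?_
    have hε : m < ε := hε
    have hε0 : 0 ≤ ε := by linarith
    rw [Real.norm_eq_abs, abs_mul, abs_mul, abs_of_nonneg hε0]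
    calc _ ≤ ε ^ 3 * (C * Real.exp (-(F₁ / T0) * ε) * ε) := by
          gcongr
          · exact momentum_bound_three hm hε
          · exact (hb ε x hε.le (le_of_lt hx)).2.2
      _ = _ := by ring
  · refine (ae_restrict_mem measurableSet_Ioi).mono fun ε hε x hx => ?_
    have h1 := hasDerivAt_phaseN gs T0 μ0 z (ε * x)
      (hb ε x (le_of_lt hε) (le_of_lt hx)).1.ne'
    have h2 : HasDerivAt (fun y : ℝ => ε * y) ε x := by
      simpa using (hasDerivAt_id x).const_mul ε
    exact (h1.comp x h2).const_mul _

/-- Integration by parts for the differentiated pressure integral, multiplied by `F`. -/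
lemma integral_by_parts {m gs T0 μ0 z F : ℝ} (hm : 0 ≤ m) (hgs : 0 < gs) (hT0 : 0 < T0)
    (hz : z = -1 ∨ z = 1) (hF : 0 < F) (h : z = -1 → μ0 < m * F) :
    F * (∫ ε in Ioi m, (ε ^ 2 - m ^ 2) ^ ((3 : ℝ) / 2) * (phaseNDeriv gs T0 μ0 z (ε * F) * ε))
      = -(3 * (∫ ε in Ioi m,
          ((ε ^ 2 - m ^ 2) ^ ((3 : ℝ) / 2) + m ^ 2 * (ε ^ 2 - m ^ 2) ^ ((1 : ℝ) / 2))
            * phaseN gs T0 μ0 z (ε * F))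
        + ∫ ε in Ioi m, (ε ^ 2 - m ^ 2) ^ ((3 : ℝ) / 2) * phaseN gs T0 μ0 z (ε * F)) := by
  obtain ⟨C, hC, hb⟩ := exists_uniform_bound (gs := gs) hm hgs hT0 hz h hF
  have hk : 0 < F / T0 := by positivity
  have hN := measurable_phaseN gs T0 μ0 z
  have hN' := measurable_phaseNDeriv gs T0 μ0 z
  have i1 : IntegrableOn
      (fun ε => (ε ^ 2 - m ^ 2) ^ ((3 : ℝ) / 2) * phaseN gs T0 μ0 z (ε * F)) (Ioi m) :=
    integrableOn_of_bound hm hk 3 (by fun_prop) (by fun_prop)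
      (fun ε hε => momentum_bound_three hm hε) (fun ε hε => (hb ε F hε.le le_rfl).2.1)
  have i2 : IntegrableOn
      (fun ε => (ε ^ 2 - m ^ 2) ^ ((1 : ℝ) / 2) * phaseN gs T0 μ0 z (ε * F)) (Ioi m) :=
    integrableOn_of_bound hm hk 1 (by fun_prop) (by fun_prop)
      (fun ε hε => by simpa using momentum_bound_one hm hε)
      (fun ε hε => (hb ε F hε.le le_rfl).2.1)
  have i3 : IntegrableOn
      (fun ε => (ε ^ 2 - m ^ 2) ^ ((3 : ℝ) / 2) * (phaseNDeriv gs T0 μ0 z (ε * F) * ε))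
      (Ioi m) := by
    have := integrableOn_of_bound (C := C) hm hk 4
      (f := fun ε => (ε ^ 2 - m ^ 2) ^ ((3 : ℝ) / 2) * ε)
      (g := fun ε => phaseNDeriv gs T0 μ0 z (ε * F)) (by fun_prop) (by fun_prop)
      (fun ε hε => by
        have hε0 : 0 ≤ ε := by linarith
        rw [abs_mul, abs_of_nonneg hε0]
        calc _ ≤ ε ^ 3 * ε := by gcongr; exact momentum_bound_three hm hε
          _ = ε ^ 4 := by ring)
      (fun ε hε => (hb ε F hε.le le_rfl).2.2)
    exact this.congr_fun (fun ε _ => by ring) measurableSet_Ioi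
  have i4 : IntegrableOn (fun ε =>
      ((ε ^ 2 - m ^ 2) ^ ((3 : ℝ) / 2) + m ^ 2 * (ε ^ 2 - m ^ 2) ^ ((1 : ℝ) / 2))
        * phaseN gs T0 μ0 z (ε * F)) (Ioi m) :=
    IntegrableOn.congr_fun (i1.add (i2.const_mul (m ^ 2)))
      (fun ε _ => by simp only [Pi.add_apply]; ring) measurableSet_Ioi
  have hNd : ∀ ε, m ≤ ε →
      HasDerivAt (fun ε => phaseN gs T0 μ0 z (ε * F)) (phaseNDeriv gs T0 μ0 z (ε * F) * F) ε := by
    intro ε hε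
    have h1 := hasDerivAt_phaseN gs T0 μ0 z (ε * F) (hb ε F hε le_rfl).1.ne'
    have h2 : HasDerivAt (fun y : ℝ => y * F) F ε := by
      simpa using (hasDerivAt_id ε).mul_const F
    exact HasDerivAt.comp (h₂ := phaseN gs T0 μ0 z) ε h1 h2
  have i5 : IntegrableOn (fun ε =>
      3 * (((ε ^ 2 - m ^ 2) ^ ((3 : ℝ) / 2) + m ^ 2 * (ε ^ 2 - m ^ 2) ^ ((1 : ℝ) / 2))
            * phaseN gs T0 μ0 z (ε * F))
        + (ε ^ 2 - m ^ 2) ^ ((3 : ℝ) / 2) * phaseN gs T0 μ0 z (ε * F)) (Ioi m) :=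
    (i4.const_mul 3).add i1
  have key := integral_Ioi_of_hasDerivAt_of_tendsto (a := m) (m := 0)
    (f := fun ε => (ε ^ 2 - m ^ 2) ^ ((3 : ℝ) / 2) * ε * phaseN gs T0 μ0 z (ε * F))
    (f' := fun ε =>
      F * ((ε ^ 2 - m ^ 2) ^ ((3 : ℝ) / 2) * (phaseNDeriv gs T0 μ0 z (ε * F) * ε))
      + (3 * (((ε ^ 2 - m ^ 2) ^ ((3 : ℝ) / 2) + m ^ 2 * (ε ^ 2 - m ^ 2) ^ ((1 : ℝ) / 2))
            * phaseN gs T0 μ0 z (ε * F))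
        + (ε ^ 2 - m ^ 2) ^ ((3 : ℝ) / 2) * phaseN gs T0 μ0 z (ε * F)))
    ?_ ?_ (Integrable.fun_add (i3.const_mul F) i5) ?_
  · rw [integral_add (i3.const_mul F) i5,
      integral_add (i4.const_mul 3) i1, integral_const_mul, integral_const_mul] at key
    have h0 : ((m : ℝ) ^ 2 - m ^ 2) ^ ((3 : ℝ) / 2) = 0 := by
      rw [sub_self, Real.zero_rpow (by norm_num)]
    rw [h0] at key
    linarith
  · have c1 : Continuous fun ε : ℝ => (ε ^ 2 - m ^ 2) ^ ((3 : ℝ) / 2) * ε :=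
      (Continuous.rpow_const (by fun_prop) fun _ => Or.inr (by norm_num)).mul continuous_id
    exact (c1.continuousAt.mul (hNd m le_rfl).continuousAt).continuousWithinAt
  · intro ε hε
    have hε : m < ε := hε
    have hp : 0 < ε ^ 2 - m ^ 2 := by nlinarith
    have d1 : HasDerivAt (fun ε : ℝ => ε ^ 2 - m ^ 2) (2 * ε) ε := by
      simpa using (hasDerivAt_pow 2 ε).sub_const (m ^ 2)
    have d2 := ((d1.rpow_const (p := (3 : ℝ) / 2) (Or.inl hp.ne')).mul (hasDerivAt_id ε)).mul
      (hNd ε hε.le)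
    refine d2.congr_deriv ?_
    have e1 : (ε ^ 2 - m ^ 2) ^ ((3 : ℝ) / 2)
        = (ε ^ 2 - m ^ 2) * (ε ^ 2 - m ^ 2) ^ ((1 : ℝ) / 2) := by
      rw [← Real.rpow_one_add' hp.le (by norm_num)]
      norm_num
    simp only [id, Pi.mul_apply]
    rw [show (3 : ℝ) / 2 - 1 = 1 / 2 by norm_num, e1]
    ring
  · -- Squeeze between `±C ε⁴ exp (-(F/T0) ε)`.
    have t := (tendsto_rpow_mul_exp_neg_mul_atTop_nhds_zero 4 (F / T0) hk).const_mul C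
    rw [mul_zero] at t
    refine squeeze_zero_norm' ?_ t
    filter_upwards [Filter.eventually_gt_atTop m] with ε hε
    have hε0 : 0 ≤ ε := by linarith
    rw [Real.norm_eq_abs, abs_mul, abs_mul, abs_of_nonneg hε0]
    calc _ ≤ ε ^ 3 * ε * (C * Real.exp (-(F / T0) * ε)) := by
          gcongr
          · exact momentum_bound_three hm hε
          · exact (hb ε F hε.le le_rfl).2.1
      _ = _ := by
          rw [show (4 : ℝ) = ((4 : ℕ) : ℝ) by norm_num, Real.rpow_natCast]
          ring

lemma hasDerivAt_Pdef {m gs T0 μ0 z F : ℝ} (hm : 0 ≤ m) (hgs : 0 < gs) (hT0 : 0 < T0)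
    (hz : z = -1 ∨ z = 1) (hF : 0 < F) (h : z = -1 → μ0 < m * F) :
    HasDerivAt (fun F => Pdef gs m T0 μ0 z F)
      (-(rhoDef gs m T0 μ0 z F + Pdef gs m T0 μ0 z F) / F) F := by
  have h1 := (integral_hasDerivAt (gs := gs) hm hgs hT0 hz hF h).const_mul (4 * π / 3)
  refine h1.congr_deriv ?_
  have h2 := integral_by_parts (gs := gs) hm hgs hT0 hz hF h
  rw [eq_div_iff hF.ne', mul_assoc, mul_comm _ F, h2, rhoDef, Pdef]
  ring

/-- On the set of `F > 0` satisfying the positivity condition, the pressure is a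
differentiable function of `F` with `F · dP/dF = −(ρ + P)`; consequently a composed
pressure profile `p(r) = P(F(r))` satisfies the hydrostatic equilibrium equation
`p′ = −(p + ρ∘F) F′/F`. -/
theorem stmt7 (m gs T0 μ0 z : ℝ) (hm : 0 ≤ m) (hgs : 0 < gs) (hT0 : 0 < T0)
    (hz : z = -1 ∨ z = 1) :
    (∀ F : ℝ, 0 < F → (z = -1 → μ0 < m * F) →
      DifferentiableAt ℝ (fun F => Pdef gs m T0 μ0 z F) F ∧
      F * deriv (fun F => Pdef gs m T0 μ0 z F) F
        = -(rhoDef gs m T0 μ0 z F + Pdef gs m T0 μ0 z F)) ∧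
    (∀ r₁ > (0 : ℝ), ∀ Ffun : ℝ → ℝ,
      (∀ r ∈ Ioo (0 : ℝ) r₁, 0 < Ffun r ∧ (z = -1 → μ0 < m * Ffun r)) →
      (∀ r ∈ Ioo (0 : ℝ) r₁, DifferentiableAt ℝ Ffun r) →
      ∀ r ∈ Ioo (0 : ℝ) r₁,
        HasDerivAt (fun r => Pdef gs m T0 μ0 z (Ffun r))
          (-(Pdef gs m T0 μ0 z (Ffun r) + rhoDef gs m T0 μ0 z (Ffun r))
            * deriv Ffun r / Ffun r) r) := by
  refine ⟨fun F hF h => ?_, fun r₁ _ Ffun hpos hdiff r hr => ?_⟩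
  · have hd := hasDerivAt_Pdef hm hgs hT0 hz hF h
    refine ⟨hd.differentiableAt, ?_⟩
    rw [hd.deriv]
    field_simp
  · have hd := hasDerivAt_Pdef hm hgs hT0 hz (hpos r hr).1 (hpos r hr).2
    refine (hd.comp r (hdiff r hr).hasDerivAt).congr_deriv ?_
    ring
end

section
/- Fix m ≥ 0, g_s > 0, μ0 ∈ ℝ, F > 0, z ∈ {−1, 1}, and assume the positivity condition (z = 1, or z = −1 and mF > μ0). Then the function T0 ↦ P (pressure as a function of the temperature parameter T0 > 0, with all other parameters fixed) is differentiable and satisfies ∂P/∂T0 = σ/F, where σ is the entropy density evaluated at the same parameters. -/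
/-!
Differentiating the occupation number in the temperature and in the energy gives the same factor
`exp(b/t) / (exp(b/t) + z)²`, where `b = εF - μ0`, and hence
`∂_t 𝒩(εF) = -((ε - μ0/F)/t) ∂_ε 𝒩(εF)`. After differentiating the pressure under the integral
sign, an integration by parts in `ε` moves `∂_ε` onto `(ε² - m²)^{3/2} (ε - μ0/F)`, whose
derivative is three times the weight in the entropy density (`hasDerivAt_boundary`). The boundary
terms vanish: the weight is zero at `ε = m`, and `𝒩` decays exponentially at infinity.

The analytic input is a bound `K exp(-aε)`, uniform for temperatures in `(T0/2, 2 T0)`, on the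
occupation number and on the factor above (`weight_bounds`). In the Bose case this uses
`μ0 < mF`, which keeps `exp(b/t) - 1` above a fixed positive multiple of `exp(b/t)`.
-/

open MeasureTheory Real Set

/-! ### Uniform exponential bounds -/

/-- The Bose or Fermi denominator dominates a fixed multiple of the Boltzmann factor, uniformly for
temperatures near `T0`. -/
lemma exp_add_lower (m μ0 F z T0 : ℝ) (hF : 0 < F) (hz : z = -1 ∨ z = 1)
    (hpos : z = -1 → μ0 < m * F) (hT : 0 < T0) :
    ∃ c > 0, ∀ t ∈ Ioo (T0 / 2) (2 * T0), ∀ ε, m ≤ ε →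
      c * exp ((ε * F - μ0) / t) ≤ exp ((ε * F - μ0) / t) + z := by
  rcases hz with rfl | rfl
  · have hδ : 0 < m * F - μ0 := sub_pos.2 (hpos rfl)
    refine ⟨1 - exp (-((m * F - μ0) / (2 * T0))), ?_, ?_⟩
    · have : exp (-((m * F - μ0) / (2 * T0))) < 1 := by
        rw [exp_lt_one_iff]; simp only [Left.neg_neg_iff]; positivity
      linarith
    · rintro t ⟨ht1, ht2⟩ ε hε
      have ht : 0 < t := by linarith
      have h1 : (m * F - μ0) / (2 * T0) ≤ (ε * F - μ0) / t := by
        have : m * F ≤ ε * F := by gcongr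
        apply div_le_div₀ <;> linarith
      have h2 : 1 ≤ exp (-((m * F - μ0) / (2 * T0))) * exp ((ε * F - μ0) / t) := by
        rw [← exp_add]; apply one_le_exp; linarith
      linarith
  · exact ⟨1, one_pos, fun t _ ε _ => by linarith⟩

/-- Uniform exponential decay, near the temperature `T0`, of the occupation number
`(exp(b/t) + z)⁻¹` and of the factor `exp(b/t) / (exp(b/t) + z)²` occurring in its derivatives. -/
lemma weight_bounds (m μ0 F z T0 : ℝ) (hm : 0 ≤ m) (hF : 0 < F) (hz : z = -1 ∨ z = 1)
    (hpos : z = -1 → μ0 < m * F) (hT : 0 < T0) :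
    ∃ K > 0, ∃ a > 0, ∀ t ∈ Ioo (T0 / 2) (2 * T0), ∀ ε, m ≤ ε →
      0 < exp ((ε * F - μ0) / t) + z ∧
      (exp ((ε * F - μ0) / t) + z)⁻¹ ≤ K * exp (-a * ε) ∧
      exp ((ε * F - μ0) / t) / (exp ((ε * F - μ0) / t) + z) ^ 2 ≤ K * exp (-a * ε) := by
  obtain ⟨c, hc, h⟩ := exp_add_lower m μ0 F z T0 hF hz hpos hT
  refine ⟨(c⁻¹ + (c ^ 2)⁻¹) * exp (2 * |μ0| / T0), by positivity, F / (2 * T0), by positivity, ?_⟩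
  intro t ht' ε hε
  have hl := h t ht' ε hε
  obtain ⟨ht1, ht2⟩ := ht'
  have ht : 0 < t := by linarith
  have hε0 : 0 ≤ ε := hm.trans hε
  have hX : (exp ((ε * F - μ0) / t))⁻¹ ≤ exp (2 * |μ0| / T0) * exp (-(F / (2 * T0)) * ε) := by
    rw [← exp_neg, ← exp_add, exp_le_exp]
    have h1 : μ0 / t ≤ 2 * |μ0| / T0 := by
      rw [div_le_div_iff₀ ht hT]
      nlinarith [le_abs_self μ0, abs_nonneg μ0]
    have h2 : F / (2 * T0) * ε ≤ ε * F / t := by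
      rw [div_mul_eq_mul_div, mul_comm F]
      gcongr
    rw [sub_div]; linarith
  set X := exp ((ε * F - μ0) / t) with hXdef
  have hX0 : 0 < X := exp_pos _
  have hp : 0 < X + z := lt_of_lt_of_le (by positivity) hl
  have hi : 0 < X⁻¹ := by positivity
  refine ⟨hp, ?_, ?_⟩
  · calc (X + z)⁻¹ ≤ (c * X)⁻¹ := by gcongr
      _ = c⁻¹ * X⁻¹ := by rw [mul_inv]
      _ ≤ (c⁻¹ + (c ^ 2)⁻¹) * X⁻¹ := by
        gcongr; have : 0 < (c ^ 2)⁻¹ := by positivity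
        linarith
      _ ≤ _ := by rw [mul_assoc]; gcongr
  · calc X / (X + z) ^ 2 ≤ X / (c * X) ^ 2 := by gcongr
      _ = (c ^ 2)⁻¹ * X⁻¹ := by field_simp
      _ ≤ (c⁻¹ + (c ^ 2)⁻¹) * X⁻¹ := by
        gcongr; have : 0 < c⁻¹ := by positivity
        linarith
      _ ≤ _ := by rw [mul_assoc]; gcongr

/-- Half of the exponential decay absorbs the polynomial weight, by the degree-four term of the
exponential series. -/
lemma poly_exp_bound (a : ℝ) (ha : 0 < a) :
    ∃ K > 0, ∀ ε : ℝ, 0 ≤ ε → (1 + ε) ^ 4 * exp (-a * ε) ≤ K * exp (-(a / 2) * ε) := by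
  refine ⟨24 / (a / 2) ^ 4 * exp (a / 2), by positivity, fun ε hε => ?_⟩
  have h := Real.pow_div_factorial_le_exp (a / 2 * (1 + ε)) (by positivity) 4
  have h1 : (1 + ε) ^ 4 ≤ 24 / (a / 2) ^ 4 * exp (a / 2 * (1 + ε)) := by
    rw [div_mul_eq_mul_div, le_div_iff₀ (by positivity)]
    rw [div_le_iff₀ (by positivity)] at h
    norm_num [Nat.factorial] at h ⊢
    nlinarith
  calc _ ≤ 24 / (a / 2) ^ 4 * exp (a / 2 * (1 + ε)) * exp (-a * ε) := by gcongr
    _ = _ := by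
      rw [mul_assoc, mul_assoc, ← exp_add, ← exp_add]; congr 2; ring

lemma rpow_bounds (m ε : ℝ) (hm : 0 ≤ m) (hε : m ≤ ε) :
    0 ≤ (ε ^ 2 - m ^ 2) ^ ((3 : ℝ) / 2) ∧ (ε ^ 2 - m ^ 2) ^ ((3 : ℝ) / 2) ≤ (1 + ε) ^ 3 ∧
    0 ≤ (ε ^ 2 - m ^ 2) ^ ((1 : ℝ) / 2) ∧ (ε ^ 2 - m ^ 2) ^ ((1 : ℝ) / 2) ≤ 1 + ε := by
  have h0 : 0 ≤ ε ^ 2 - m ^ 2 := by nlinarith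
  have h1 : ε ^ 2 - m ^ 2 ≤ (1 + ε) ^ 2 := by nlinarith
  have h2 : 0 ≤ 1 + ε := by linarith
  refine ⟨rpow_nonneg h0 _, ?_, rpow_nonneg h0 _, ?_⟩
  · calc _ ≤ ((1 + ε) ^ 2) ^ ((3 : ℝ) / 2) := by gcongr
      _ = _ := by
        rw [← rpow_natCast, ← rpow_mul h2, ← rpow_natCast]; norm_num
  · calc _ ≤ ((1 + ε) ^ 2) ^ ((1 : ℝ) / 2) := by gcongr
      _ = _ := by
        rw [← rpow_natCast, ← rpow_mul h2]; norm_num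

lemma rpow_three_half (x : ℝ) (hx : 0 ≤ x) : x ^ ((3 : ℝ) / 2) = x * x ^ ((1 : ℝ) / 2) := by
  rw [show (3 : ℝ) / 2 = 1 + 1 / 2 by norm_num, rpow_add_of_nonneg hx (by norm_num) (by norm_num),
    rpow_one]

lemma integrableOn_of_bound_s8 (m a K : ℝ) (hm : 0 ≤ m) (ha : 0 < a) (hK : 0 ≤ K) (f : ℝ → ℝ)
    (hf : Measurable f) (h : ∀ ε, m < ε → |f ε| ≤ K * ((1 + ε) ^ 4 * exp (-a * ε))) :
    IntegrableOn f (Ioi m) := by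
  obtain ⟨K', hK', h'⟩ := poly_exp_bound a ha
  have hi := (exp_neg_integrableOn_Ioi m (half_pos ha)).const_mul (K * K')
  refine Integrable.mono' hi hf.aestronglyMeasurable ?_
  refine (ae_restrict_iff' measurableSet_Ioi).2 (Filter.Eventually.of_forall fun ε hε => ?_)
  rw [Real.norm_eq_abs, mul_assoc]
  exact (h ε hε).trans (mul_le_mul_of_nonneg_left (h' ε (hm.trans (le_of_lt hε))) hK)

/-! ### Energy and temperature derivatives of the integrands -/

/-- The antiderivative used for integrating by parts: by
`∂_t 𝒩(εF) = -((ε - μ0/F)/t) ∂_ε 𝒩(εF)`, the `ε`-derivative of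
`(ε² - m²)^{3/2} (ε - μ0/F) 𝒩(εF)` is three times the entropy integrand minus `t` times the
temperature derivative of the pressure integrand. -/
lemma hasDerivAt_boundary (m gs μ0 F z t ε : ℝ) (hm : 0 ≤ m) (hε : m < ε) (hF : 0 < F) (ht : 0 < t)
    (hp : 0 < exp ((ε * F - μ0) / t) + z) :
    HasDerivAt (fun ε => (ε ^ 2 - m ^ 2) ^ ((3 : ℝ) / 2) * ((ε - μ0 / F) * phaseN gs t μ0 z (ε * F)))
      (3 * (((4 / 3) * (ε ^ 2 - m ^ 2) ^ ((3 : ℝ) / 2)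
      + (ε ^ 2 - m ^ 2) ^ ((1 : ℝ) / 2) * (m ^ 2 - ε * μ0 / F)) * phaseN gs t μ0 z (ε * F))
      - t * ((ε ^ 2 - m ^ 2) ^ ((3 : ℝ) / 2) * (gs / (8 * π ^ 3) * ((ε * F - μ0) / t ^ 2 *
        (exp ((ε * F - μ0) / t) / (exp ((ε * F - μ0) / t) + z) ^ 2))))) ε := by
  have h0 : 0 < ε ^ 2 - m ^ 2 := by nlinarith
  have hq : HasDerivAt (fun ε : ℝ => (ε ^ 2 - m ^ 2) ^ ((3 : ℝ) / 2))
      (3 * ε * (ε ^ 2 - m ^ 2) ^ ((1 : ℝ) / 2)) ε := by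
    have := (((hasDerivAt_pow 2 ε).sub_const (m ^ 2)).rpow_const (p := (3 : ℝ) / 2) (Or.inl h0.ne'))
    convert this using 1
    rw [show (3 : ℝ) / 2 - 1 = 1 / 2 by norm_num]
    push_cast; ring
  have he : HasDerivAt (fun ε : ℝ => exp ((ε * F - μ0) / t) + z)
      (exp ((ε * F - μ0) / t) * (F / t)) ε := by
    have := (((((hasDerivAt_id ε).mul_const F).sub_const μ0).div_const t).exp).add_const z
    simpa using this
  have hN : HasDerivAt (fun ε => phaseN gs t μ0 z (ε * F)) _ ε :=
    (he.inv hp.ne').const_mul (gs / (8 * π ^ 3))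
  have := hq.mul (((hasDerivAt_id ε).sub_const (μ0 / F)).mul hN)
  refine this.congr_deriv ?_
  simp only [phaseN, id, Pi.mul_apply]
  rw [rpow_three_half _ h0.le]
  field_simp
  ring

lemma hasDerivAt_temperature (gs μ0 F z t ε : ℝ) (ht : 0 < t)
    (hp : 0 < exp ((ε * F - μ0) / t) + z) :
    HasDerivAt (fun t => phaseN gs t μ0 z (ε * F))
      (gs / (8 * π ^ 3) * ((ε * F - μ0) / t ^ 2 *
        (exp ((ε * F - μ0) / t) / (exp ((ε * F - μ0) / t) + z) ^ 2))) t := by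
  have he : HasDerivAt (fun t : ℝ => exp ((ε * F - μ0) / t) + z) _ t :=
    (((hasDerivAt_inv ht.ne').const_mul (ε * F - μ0)).exp).add_const z
  refine ((he.inv hp.ne').const_mul (gs / (8 * π ^ 3))).congr_deriv ?_
  simp only [← div_eq_mul_inv]
  field_simp

/-! ### The temperature derivative of the pressure -/

/-- The pressure, as a function of the temperature parameter `T0 > 0` with all other
parameters fixed, is differentiable with `∂P/∂T0 = σ/F`. -/
theorem stmt8 (m gs μ0 F z : ℝ) (hm : 0 ≤ m) (hgs : 0 < gs) (hF : 0 < F)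
    (hz : z = -1 ∨ z = 1) (hpos : z = -1 → μ0 < m * F) :
    ∀ T0 > (0 : ℝ),
      HasDerivAt (fun t => Pdef gs m t μ0 z F) (sigmaDef gs m T0 μ0 z F / F) T0 := by
  intro T0 hT
  obtain ⟨K, hK, a, ha, hw⟩ := weight_bounds m μ0 F z T0 hm hF hz hpos hT
  set C := gs / (8 * π ^ 3) with hC
  have hC0 : 0 < C := by positivity
  have hT0 : T0 ∈ Ioo (T0 / 2) (2 * T0) := ⟨by linarith, by linarith⟩
  let D : ℝ → ℝ → ℝ := fun t ε => (ε ^ 2 - m ^ 2) ^ ((3 : ℝ) / 2) * (C * ((ε * F - μ0) / t ^ 2 *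
        (exp ((ε * F - μ0) / t) / (exp ((ε * F - μ0) / t) + z) ^ 2)))
  let S : ℝ → ℝ := fun ε => ((4 / 3) * (ε ^ 2 - m ^ 2) ^ ((3 : ℝ) / 2)
      + (ε ^ 2 - m ^ 2) ^ ((1 : ℝ) / 2) * (m ^ 2 - ε * μ0 / F)) * phaseN gs T0 μ0 z (ε * F)
  have hN : ∀ ε, m < ε → |phaseN gs T0 μ0 z (ε * F)| ≤ C * (K * exp (-a * ε)) := by
    intro ε hε
    obtain ⟨h1, h2, -⟩ := hw T0 hT0 ε hε.le
    rw [phaseN, ← hC, abs_of_nonneg (by positivity)]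
    gcongr
  have hmeas : ∀ t, Measurable fun ε =>
      (ε ^ 2 - m ^ 2) ^ ((3 : ℝ) / 2) * phaseN gs t μ0 z (ε * F) := by
    intro t; unfold phaseN; fun_prop
  have hPint : IntegrableOn
      (fun ε => (ε ^ 2 - m ^ 2) ^ ((3 : ℝ) / 2) * phaseN gs T0 μ0 z (ε * F)) (Ioi m) := by
    refine integrableOn_of_bound_s8 m a (C * K) hm ha (by positivity) _ (hmeas T0) fun ε hε => ?_
    obtain ⟨h1, h2, -, -⟩ := rpow_bounds m ε hm hε.le
    have hy : 1 ≤ 1 + ε := by linarith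
    rw [abs_mul, abs_of_nonneg h1]
    calc _ ≤ (1 + ε) ^ 4 * (C * (K * exp (-a * ε))) := by
          gcongr
          · exact h2.trans (pow_le_pow_right₀ hy (by norm_num))
          · exact hN ε hε
      _ = _ := by ring
  have hSint : IntegrableOn S (Ioi m) := by
    refine integrableOn_of_bound_s8 m a ((4 / 3 + m ^ 2 + |μ0 / F|) * (C * K)) hm ha (by positivity) _
      (by simp only [S]; unfold phaseN; fun_prop) fun ε hε => ?_
    obtain ⟨h1, h2, h3, h4⟩ := rpow_bounds m ε hm hε.le
    have hy : 1 ≤ 1 + ε := by linarith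
    have hε0 : 0 < ε := by linarith
    simp only [S]
    rw [abs_mul]
    have h5 : |m ^ 2 - ε * μ0 / F| ≤ (m ^ 2 + |μ0 / F|) * (1 + ε) := by
      refine (abs_sub _ _).trans ?_
      rw [mul_div_assoc, abs_mul, abs_of_pos hε0, abs_of_nonneg (sq_nonneg m)]
      nlinarith [abs_nonneg (μ0 / F), sq_nonneg m, mul_nonneg (sq_nonneg m) hε0.le]
    have h6 : |(4 / 3) * (ε ^ 2 - m ^ 2) ^ ((3 : ℝ) / 2)
      + (ε ^ 2 - m ^ 2) ^ ((1 : ℝ) / 2) * (m ^ 2 - ε * μ0 / F)|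
        ≤ (4 / 3 + m ^ 2 + |μ0 / F|) * (1 + ε) ^ 4 := by
      refine (abs_add_le _ _).trans ?_
      rw [abs_mul, abs_mul, abs_of_nonneg h1, abs_of_nonneg h3, abs_of_pos (by norm_num : (0:ℝ) < 4/3)]
      calc _ ≤ 4 / 3 * (1 + ε) ^ 3 + (1 + ε) * ((m ^ 2 + |μ0 / F|) * (1 + ε)) := by gcongr
        _ = 4 / 3 * (1 + ε) ^ 3 + (m ^ 2 + |μ0 / F|) * (1 + ε) ^ 2 := by ring
        _ ≤ 4 / 3 * (1 + ε) ^ 4 + (m ^ 2 + |μ0 / F|) * (1 + ε) ^ 4 := by gcongr <;> norm_num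
        _ = _ := by ring
    calc _ ≤ (4 / 3 + m ^ 2 + |μ0 / F|) * (1 + ε) ^ 4 * (C * (K * exp (-a * ε))) := by
          gcongr
          exact hN ε hε
      _ = _ := by ring
  -- On `(T0/2, 2 T0)` the factor `1/t²` is at most `4/T0²`.
  let B : ℝ → ℝ := fun ε => (C * (4 / T0 ^ 2) * (F + |μ0|) * K) * ((1 + ε) ^ 4 * exp (-a * ε))
  have hBint : IntegrableOn B (Ioi m) := by
    refine integrableOn_of_bound_s8 m a (C * (4 / T0 ^ 2) * (F + |μ0|) * K) hm ha (by positivity) _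
      (by simp only [B]; fun_prop) fun ε hε => ?_
    have : 0 < 1 + ε := by linarith
    rw [abs_of_nonneg (by positivity)]
  have hDB : ∀ ε, m < ε → ∀ t ∈ Ioo (T0 / 2) (2 * T0), ‖D t ε‖ ≤ B ε := by
    intro ε hε t ht
    obtain ⟨h1, h2, -, -⟩ := rpow_bounds m ε hm hε.le
    obtain ⟨h3, -, h4⟩ := hw t ht ε hε.le
    have hε0 : 0 < ε := by linarith
    have ht0 : 0 < t := by linarith [ht.1]
    have h5 : |(ε * F - μ0) / t ^ 2| ≤ (F + |μ0|) * (1 + ε) * (4 / T0 ^ 2) := by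
      rw [abs_div, abs_of_pos (by positivity : 0 < t ^ 2), div_eq_mul_inv]
      gcongr
      · refine (abs_sub _ _).trans ?_
        rw [abs_of_nonneg (by positivity)]
        nlinarith [abs_nonneg μ0, mul_nonneg (abs_nonneg μ0) hε0.le]
      · rw [inv_le_comm₀ (by positivity) (by positivity), inv_div]
        nlinarith [ht.1]
    simp only [D, B]
    rw [Real.norm_eq_abs, abs_mul, abs_mul, abs_mul, abs_of_nonneg h1, abs_of_pos hC0,
      abs_of_nonneg (by positivity :
        0 ≤ exp ((ε * F - μ0) / t) / (exp ((ε * F - μ0) / t) + z) ^ 2)]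
    calc _ ≤ (1 + ε) ^ 3 * (C * ((F + |μ0|) * (1 + ε) * (4 / T0 ^ 2) * (K * exp (-a * ε)))) := by
          gcongr
      _ = _ := by ring
  obtain ⟨hDint, hder⟩ := hasDerivAt_integral_of_dominated_loc_of_deriv_le
    (μ := volume.restrict (Ioi m)) (s := Ioo (T0 / 2) (2 * T0)) (x₀ := T0)
    (F := fun t ε => (ε ^ 2 - m ^ 2) ^ ((3 : ℝ) / 2) * phaseN gs t μ0 z (ε * F)) (F' := D)
    (bound := B) (Ioo_mem_nhds hT0.1 hT0.2)
    (Filter.Eventually.of_forall fun t => (hmeas t).aestronglyMeasurable) hPint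
    (by
      have : Measurable (D T0) := by simp only [D]; fun_prop
      exact this.aestronglyMeasurable)
    ((ae_restrict_iff' measurableSet_Ioi).2 (Filter.Eventually.of_forall hDB)) hBint
    ((ae_restrict_iff' measurableSet_Ioi).2 (Filter.Eventually.of_forall fun ε hε t ht =>
      (hasDerivAt_temperature gs μ0 F z t ε (by linarith [ht.1])
        (hw t ht ε (le_of_lt hε)).1).const_mul _))
  have hIBP : ∫ ε in Ioi m, (3 * S ε - T0 * D T0 ε) = 0 := by
    rw [integral_Ioi_of_hasDerivAt_of_tendsto
      (f := fun ε => (ε ^ 2 - m ^ 2) ^ ((3 : ℝ) / 2) *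
        ((ε - μ0 / F) * phaseN gs T0 μ0 z (ε * F))) (m := 0) ?_
      (fun ε hε => hasDerivAt_boundary m gs μ0 F z T0 ε hm hε hF hT (hw T0 hT0 ε (le_of_lt hε)).1)
      ((hSint.const_mul 3).sub (hDint.const_mul T0)) ?_]
    · simp only [sub_self]
      rw [zero_rpow (by norm_num)]; simp
    · refine ContinuousAt.continuousWithinAt ?_
      have hp := (hw T0 hT0 m le_rfl).1.ne'
      unfold phaseN
      refine ContinuousAt.mul ?_ (ContinuousAt.mul (by fun_prop) (ContinuousAt.mul (by fun_prop)
        (ContinuousAt.inv₀ (by fun_prop) hp)))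
      exact ContinuousAt.rpow_const (by fun_prop) (Or.inr (by norm_num))
    · obtain ⟨K', hK', h'⟩ := poly_exp_bound a ha
      have hlim : Filter.Tendsto (fun ε : ℝ => (1 + |μ0 / F|) * (C * K) * (K' * exp (-(a / 2) * ε)))
          Filter.atTop (nhds 0) := by
        have h1 : Filter.Tendsto (fun ε : ℝ => exp (-(a / 2) * ε)) Filter.atTop (nhds 0) :=
          tendsto_exp_atBot.comp
            (Filter.tendsto_id.const_mul_atTop_of_neg (by linarith : -(a / 2) < 0))
        simpa using (h1.const_mul K').const_mul ((1 + |μ0 / F|) * (C * K))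
      refine squeeze_zero_norm' ?_ hlim
      filter_upwards [Filter.eventually_gt_atTop m] with ε hε
      obtain ⟨h1, h2, -, -⟩ := rpow_bounds m ε hm hε.le
      have hε0 : 0 < ε := by linarith
      have h5 : |ε - μ0 / F| ≤ (1 + |μ0 / F|) * (1 + ε) := by
        refine (abs_sub _ _).trans ?_
        rw [abs_of_pos hε0]
        nlinarith [abs_nonneg (μ0 / F), mul_nonneg (abs_nonneg (μ0 / F)) hε0.le]
      rw [Real.norm_eq_abs, abs_mul, abs_mul, abs_of_nonneg h1]
      calc _ ≤ (1 + ε) ^ 3 * ((1 + |μ0 / F|) * (1 + ε) * (C * (K * exp (-a * ε)))) := by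
            gcongr
            exact hN ε hε
        _ = (1 + |μ0 / F|) * (C * K) * ((1 + ε) ^ 4 * exp (-a * ε)) := by ring
        _ ≤ _ := by gcongr _ * ?_; exact h' ε hε0.le
  rw [integral_sub (hSint.const_mul 3) (hDint.const_mul T0), integral_const_mul,
    integral_const_mul] at hIBP
  have hD : ∫ ε in Ioi m, D T0 ε = 3 / T0 * ∫ ε in Ioi m, S ε := by
    field_simp; linarith
  refine (hder.const_mul (4 * π / 3)).congr_deriv ?_
  have hσ : sigmaDef gs m T0 μ0 z F = 4 * π * F / T0 * ∫ ε in Ioi m, S ε := rfl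
  rw [hD, hσ]
  field_simp
end

section
/- Fix m ≥ 0, g_s > 0, T0 > 0, μ0 ∈ ℝ, F > 0, z ∈ {−1, 1}, and assume the positivity condition (z = 1, or z = −1 and mF > μ0). Then the pressure and energy density satisfy 0 ≤ 3P ≤ ρ; in particular ρ ≥ P ≥ 0, so the perfect fluid with this equation of state satisfies the dominant energy condition. -/
/-!
Under the positivity condition the phase-space density is nonnegative on `(m, ∞)`, so `P ≥ 0`, and
the integrand of `ρ` exceeds that of `3P` by `4π m² (ε² − m²)^{1/2} 𝒩(εF) ≥ 0`. Monotonicity of the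
integral then gives `3P ≤ ρ`, provided the integral defining `ρ` converges (otherwise its value
would be `0` by convention). Convergence is `integrableOn_rho`: the density is bounded by a
multiple of the Boltzmann factor `exp (−(F/T0) ε)`, against which polynomials are integrable.
-/

open MeasureTheory Real Set

/-- The positivity condition keeps the denominator comparable to the Boltzmann factor: with
`δ = (mF − μ0)/T0 > 0` in the bosonic case, `exp x − 1 ≥ (1 − exp (−δ)) exp x` for `x ≥ δ`. -/
lemma exists_mul_exp_le_denom {m T0 μ0 F z : ℝ} (hT0 : 0 < T0) (hF : 0 < F)
    (hz : z = -1 ∨ z = 1) (hpos : z = -1 → μ0 < m * F) :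
    ∃ c > 0, ∀ ε ∈ Ioi m,
      c * Real.exp ((ε * F - μ0) / T0) ≤ Real.exp ((ε * F - μ0) / T0) + z := by
  rcases hz with rfl | rfl
  · have hδ : 0 < (m * F - μ0) / T0 := div_pos (sub_pos.2 (hpos rfl)) hT0
    refine ⟨1 - Real.exp (-((m * F - μ0) / T0)), ?_, fun ε hε => ?_⟩
    · rw [gt_iff_lt, sub_pos, Real.exp_lt_one_iff]
      linarith
    · have hle : (m * F - μ0) / T0 ≤ (ε * F - μ0) / T0 := by
        have := (mem_Ioi.1 hε).le
        gcongr
      have h1 : 1 ≤ Real.exp (-((m * F - μ0) / T0)) * Real.exp ((ε * F - μ0) / T0) := by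
        rw [← Real.exp_add]
        exact Real.one_le_exp (by linarith)
      linarith
  · exact ⟨1, one_pos, fun ε _ => by linarith⟩

lemma phaseN_nonneg {m gs T0 μ0 F z : ℝ} (hgs : 0 < gs) (hT0 : 0 < T0) (hF : 0 < F)
    (hz : z = -1 ∨ z = 1) (hpos : z = -1 → μ0 < m * F) {ε : ℝ} (hε : ε ∈ Ioi m) :
    0 ≤ phaseN gs T0 μ0 z (ε * F) := by
  obtain ⟨c, hc, h⟩ := exists_mul_exp_le_denom hT0 hF hz hpos
  have : 0 ≤ Real.exp ((ε * F - μ0) / T0) + z := le_trans (by positivity) (h ε hε)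
  unfold phaseN
  positivity

lemma phaseN_le {m gs T0 μ0 F z : ℝ} (hgs : 0 < gs) (hT0 : 0 < T0) (hF : 0 < F)
    (hz : z = -1 ∨ z = 1) (hpos : z = -1 → μ0 < m * F) :
    ∃ K : ℝ, 0 ≤ K ∧ ∀ ε ∈ Ioi m,
      phaseN gs T0 μ0 z (ε * F) ≤ K * Real.exp (-(F / T0) * ε) := by
  obtain ⟨c, hc, h⟩ := exists_mul_exp_le_denom hT0 hF hz hpos
  refine ⟨gs / (8 * π ^ 3) * (c⁻¹ * Real.exp (μ0 / T0)), by positivity, fun ε hε => ?_⟩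
  have h1 : (Real.exp ((ε * F - μ0) / T0) + z)⁻¹ ≤ (c * Real.exp ((ε * F - μ0) / T0))⁻¹ :=
    inv_anti₀ (by positivity) (h ε hε)
  have h2 : (c * Real.exp ((ε * F - μ0) / T0))⁻¹
      = c⁻¹ * Real.exp (μ0 / T0) * Real.exp (-(F / T0) * ε) := by
    rw [mul_inv, ← Real.exp_neg, mul_assoc, ← Real.exp_add]
    congr 2
    ring
  unfold phaseN
  rw [h2] at h1
  rw [mul_assoc (gs / (8 * π ^ 3))]
  gcongr

/-- The energy density is a convergent integral: its integrand is dominated by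
`K (ε³ + m² ε) exp (−(F/T0) ε)`. -/
lemma integrableOn_rho {m gs T0 μ0 F z : ℝ} (hm : 0 ≤ m) (hgs : 0 < gs) (hT0 : 0 < T0)
    (hF : 0 < F) (hz : z = -1 ∨ z = 1) (hpos : z = -1 → μ0 < m * F) :
    IntegrableOn (fun ε : ℝ =>
      ((ε ^ 2 - m ^ 2) ^ ((3 : ℝ) / 2) + m ^ 2 * (ε ^ 2 - m ^ 2) ^ ((1 : ℝ) / 2))
        * phaseN gs T0 μ0 z (ε * F)) (Ioi m) := by
  obtain ⟨K, hK, hN⟩ := phaseN_le (m := m) hgs hT0 hF hz hpos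
  have hb : 0 < F / T0 := div_pos hF hT0
  have hpow : ∀ s : ℝ, -1 < s →
      IntegrableOn (fun ε : ℝ => ε ^ s * Real.exp (-(F / T0) * ε)) (Ioi m) := fun s hs => by
    have := integrableOn_rpow_mul_exp_neg_mul_rpow (p := 1) hs one_pos hb
    simp only [Real.rpow_one] at this
    exact this.mono_set (Ioi_subset_Ioi hm)
  have hdom := (((hpow 3 (by norm_num)).add
    ((hpow 1 (by norm_num)).const_mul (m ^ 2))).const_mul K)
  refine Integrable.mono' hdom ?_ ?_
  · refine Measurable.aestronglyMeasurable ?_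
    unfold phaseN
    fun_prop
  · filter_upwards [ae_restrict_mem measurableSet_Ioi] with ε hε
    have hmε : m < ε := hε
    have hε0 : 0 ≤ ε := hm.trans hmε.le
    have hN0 := phaseN_nonneg hgs hT0 hF hz hpos hε
    have hd : 0 ≤ ε ^ 2 - m ^ 2 := by nlinarith
    have hle : ε ^ 2 - m ^ 2 ≤ ε ^ 2 := by nlinarith
    have hr : ∀ s : ℝ, 0 ≤ s → (ε ^ 2 - m ^ 2) ^ (s / 2) ≤ ε ^ s := fun s hs => by
      refine (Real.rpow_le_rpow hd hle (by positivity)).trans_eq ?_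
      rw [← Real.rpow_natCast, ← Real.rpow_mul hε0]
      congr 1
      push_cast
      ring
    rw [Real.norm_of_nonneg (by positivity)]
    calc _ ≤ (ε ^ (3 : ℝ) + m ^ 2 * ε ^ (1 : ℝ)) * (K * Real.exp (-(F / T0) * ε)) := by
          gcongr
          · exact hr 3 (by norm_num)
          · exact hr 1 (by norm_num)
          · exact hN ε hε
      _ = _ := by
          simp only [Pi.add_apply]
          ring

/-- The pressure and energy density of the ideal gas satisfy `0 ≤ 3P ≤ ρ`; in particular
`ρ ≥ |P|`, so the dominant energy condition holds for the corresponding perfect fluid. -/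
theorem stmt13 (m gs T0 μ0 F z : ℝ) (hm : 0 ≤ m) (hgs : 0 < gs) (hT0 : 0 < T0) (hF : 0 < F)
    (hz : z = -1 ∨ z = 1) (hpos : z = -1 → μ0 < m * F) :
    0 ≤ 3 * Pdef gs m T0 μ0 z F ∧
    3 * Pdef gs m T0 μ0 z F ≤ rhoDef gs m T0 μ0 z F ∧
    |Pdef gs m T0 μ0 z F| ≤ rhoDef gs m T0 μ0 z F := by
  have h0 : 0 ≤ Pdef gs m T0 μ0 z F := by
    unfold Pdef
    refine mul_nonneg (by positivity) (setIntegral_nonneg measurableSet_Ioi fun ε hε => ?_)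
    have hmε : m < ε := hε
    have hd : 0 ≤ ε ^ 2 - m ^ 2 := by nlinarith
    exact mul_nonneg (Real.rpow_nonneg hd _) (phaseN_nonneg hgs hT0 hF hz hpos hε)
  have h1 : 3 * Pdef gs m T0 μ0 z F ≤ rhoDef gs m T0 μ0 z F := by
    have hI : ∫ ε in Ioi m, (ε ^ 2 - m ^ 2) ^ ((3 : ℝ) / 2) * phaseN gs T0 μ0 z (ε * F) ≤
        ∫ ε in Ioi m,
          ((ε ^ 2 - m ^ 2) ^ ((3 : ℝ) / 2) + m ^ 2 * (ε ^ 2 - m ^ 2) ^ ((1 : ℝ) / 2))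
            * phaseN gs T0 μ0 z (ε * F) := by
      refine integral_mono_of_nonneg ?_ (integrableOn_rho hm hgs hT0 hF hz hpos) ?_
      all_goals
        filter_upwards [ae_restrict_mem measurableSet_Ioi] with ε hε
        have hmε : m < ε := hε
        have hd : 0 ≤ ε ^ 2 - m ^ 2 := by nlinarith
        have hN0 := phaseN_nonneg hgs hT0 hF hz hpos hε
      · exact mul_nonneg (Real.rpow_nonneg hd _) hN0
      · exact mul_le_mul_of_nonneg_right (le_add_of_nonneg_right (by positivity)) hN0
    unfold Pdef rhoDef
    calc _ = 4 * π * ∫ ε in Ioi m,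
          (ε ^ 2 - m ^ 2) ^ ((3 : ℝ) / 2) * phaseN gs T0 μ0 z (ε * F) := by ring
      _ ≤ _ := by gcongr
  refine ⟨by linarith, h1, ?_⟩
  rw [abs_of_nonneg h0]
  linarith
end
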